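/- arXiv:1808.04199 — 2 statements merged into one kernel-verified Lean document; each statement's English description precedes it below -/
import Mathlib

section
/- For every n ≥ 3, the number R_n of permutations of length n with maximal rev-tier n−2 equals the Euler number E_{n−1}, i.e., the number of down-up alternating permutations of length n−1. Hence the maximal rev-tier permutations form an Entringer family. -/
/-!
The positions `τ = σ⁻¹` of a permutation `σ` of length `n` of maximal rev-tier `n - 2` are
those for which *every* pair `(i, i+1)` with `i ≤ n - 3` (0-indexed values) is separated, with
orientations alternating and starting with down: an alternating chain of length `n - 2` must
use all the available pairs (`revTier_eq_iff`).

Remove the smallest value: `τ` is determined by `p = τ 0` and the standardisation `τ'` of the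
remaining positions (`permCons`). The pair `(0, 1)` is down separated iff `p > τ' 0 + 1` and up
separated iff `p < τ' 0` (`sepAlt_cons`), whereas in an alternating permutation `π` the first
step is a descent iff `p > π' 0` and an ascent iff `p ≤ π' 0` (`alt_cons`). Shifting `p` by one
in the down case converts one pair of conditions into the other, so the numbers of the two kinds
of objects with prescribed first entry satisfy the same recursion (`count_step`). The two
families are thus equinumerous, `τ` having one more entry than `π`.
-/

/-!  Common definitions: permutation patterns, separated pairs, rev-tier. -/

/-- `π` contains the pattern `σ`. -/
def Pattern.Contains {n k : ℕ} (π : Equiv.Perm (Fin n)) (σ : Equiv.Perm (Fin k)) : Prop :=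
  ∃ α : Fin k → Fin n, StrictMono α ∧ ∀ i j : Fin k, (π (α i) < π (α j) ↔ σ i < σ j)

/-- `π` avoids the pattern `σ`. -/
def Pattern.Avoids {n k : ℕ} (π : Equiv.Perm (Fin n)) (σ : Equiv.Perm (Fin k)) : Prop :=
  ¬ Pattern.Contains π σ

/-- The pair of values `(a, a+1)` (0-indexed) is an up oriented separated pair in `σ`:
`a` precedes `a+1` and some value `> a+1` occurs strictly between them. -/
def UpSepPair {n : ℕ} (σ : Equiv.Perm (Fin n)) (a : Fin n) : Prop :=
  ∃ hb : (a : ℕ) + 1 < n,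
    σ.symm a < σ.symm ⟨(a : ℕ) + 1, hb⟩ ∧
    ∃ p : Fin n, σ.symm a < p ∧ p < σ.symm ⟨(a : ℕ) + 1, hb⟩ ∧ (a : ℕ) + 1 < (σ p : ℕ)

/-- The pair of values `(a, a+1)` (0-indexed) is a down oriented separated pair in `σ`. -/
def DownSepPair {n : ℕ} (σ : Equiv.Perm (Fin n)) (a : Fin n) : Prop :=
  ∃ hb : (a : ℕ) + 1 < n,
    σ.symm ⟨(a : ℕ) + 1, hb⟩ < σ.symm a ∧
    ∃ p : Fin n, σ.symm ⟨(a : ℕ) + 1, hb⟩ < p ∧ p < σ.symm a ∧ (a : ℕ) + 1 < (σ p : ℕ)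

/-- `(a, a+1)` is a separated pair (of either orientation). -/
def SepPair {n : ℕ} (σ : Equiv.Perm (Fin n)) (a : Fin n) : Prop :=
  UpSepPair σ a ∨ DownSepPair σ a

/-- `σ` has no separated pairs. -/
def NoSepPairs {n : ℕ} (σ : Equiv.Perm (Fin n)) : Prop :=
  ∀ a : Fin n, ¬ SepPair σ a

/-- `f` lists the lower values of an increasing sequence of separated pairs in `σ` with
alternating orientations; the first pair is down oriented iff `firstDown = true`. -/
def AltChain {n : ℕ} (σ : Equiv.Perm (Fin n)) (firstDown : Bool) {t : ℕ}
    (f : Fin t → Fin n) : Prop :=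
  StrictMono f ∧ ∀ j : Fin t,
    if ((j : ℕ) % 2 = 0) ↔ (firstDown = true) then DownSepPair σ (f j)
    else UpSepPair σ (f j)

/-- The rev-tier of `σ`: the maximal length of an increasing sequence of separated pairs
with alternating orientations beginning with a down oriented pair. -/
noncomputable def revTier {n : ℕ} (σ : Equiv.Perm (Fin n)) : ℕ :=
  sSup {t : ℕ | ∃ f : Fin t → Fin n, AltChain σ true f}

/-- Maximal length of an increasing alternating sequence of separated pairs (either
starting orientation). -/
noncomputable def maxAltLen {n : ℕ} (σ : Equiv.Perm (Fin n)) : ℕ :=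
  sSup {t : ℕ | ∃ b : Bool, ∃ f : Fin t → Fin n, AltChain σ b f}

/-- `σ` has a separated pair and every maximum-length increasing alternating sequence of
separated pairs begins with an up oriented pair. -/
def UpOriented {n : ℕ} (σ : Equiv.Perm (Fin n)) : Prop :=
  1 ≤ maxAltLen σ ∧ ¬ ∃ f : Fin (maxAltLen σ) → Fin n, AltChain σ true f

/-- `σ` has a separated pair and every maximum-length increasing alternating sequence of
separated pairs begins with a down oriented pair. -/
def DownOriented {n : ℕ} (σ : Equiv.Perm (Fin n)) : Prop :=
  1 ≤ maxAltLen σ ∧ ¬ ∃ f : Fin (maxAltLen σ) → Fin n, AltChain σ false f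

/-- `σ` is a basis element of the class of permutations of rev-tier at most `t`. -/
def IsBasisElt (t : ℕ) {n : ℕ} (σ : Equiv.Perm (Fin n)) : Prop :=
  t + 1 ≤ revTier σ ∧
  ∀ (m : ℕ) (τ : Equiv.Perm (Fin m)), m < n → Pattern.Contains σ τ → revTier τ ≤ t

/-- The entry `1` of `σ` is in (1-indexed) position `k`. -/
def onePos {n : ℕ} (σ : Equiv.Perm (Fin n)) (k : ℕ) : Prop :=
  ∀ h : 0 < n, (σ.symm ⟨0, h⟩ : ℕ) + 1 = k

/-- `η(n,k)`: number of permutations of length `n` with no separated pairs and entry `1`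
in position `k`. -/
noncomputable def eta (n k : ℕ) : ℕ :=
  Nat.card {σ : Equiv.Perm (Fin n) // NoSepPairs σ ∧ onePos σ k}

/-- `η(n)`: number of permutations of length `n` with no separated pairs. -/
noncomputable def etaTot (n : ℕ) : ℕ :=
  Nat.card {σ : Equiv.Perm (Fin n) // NoSepPairs σ}

/-- `μ_U(n,t,k)`: number of up-oriented permutations of length `n`, rev-tier `t`, with
entry `1` in position `k`. -/
noncomputable def muU (n t k : ℕ) : ℕ :=
  Nat.card {σ : Equiv.Perm (Fin n) // UpOriented σ ∧ revTier σ = t ∧ onePos σ k}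

/-- `μ_D(n,t,k)`: number of down-oriented permutations of length `n`, rev-tier `t`, with
entry `1` in position `k`. -/
noncomputable def muD (n t k : ℕ) : ℕ :=
  Nat.card {σ : Equiv.Perm (Fin n) // DownOriented σ ∧ revTier σ = t ∧ onePos σ k}

/-- `π` is a down-up alternating permutation: `π₁ > π₂ < π₃ > ⋯`. -/
def DownUp {n : ℕ} (π : Equiv.Perm (Fin n)) : Prop :=
  ∀ (i : ℕ) (h : i + 1 < n),
    if i % 2 = 0 then π ⟨i + 1, h⟩ < π ⟨i, by omega⟩
    else π ⟨i, by omega⟩ < π ⟨i + 1, h⟩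

/-- The Entringer number `E_{n,k}`: down-up alternating permutations of length `n` whose
first entry is `k` (1-indexed value). -/
noncomputable def entringer (n k : ℕ) : ℕ :=
  Nat.card {π : Equiv.Perm (Fin n) // DownUp π ∧ ∀ h : 0 < n, (π ⟨0, h⟩ : ℕ) + 1 = k}

/-- The reversal of a permutation: `(revP σ) j = σ (n + 1 - j)`. -/
def revP {n : ℕ} (σ : Equiv.Perm (Fin n)) : Equiv.Perm (Fin n) :=
  (Fin.revPerm).trans σ

/-- The explicit maximal rev-tier permutation of length `n` (0-indexed values):
the even entries of `{1,…,n}` in decreasing order, then `n`, then the odd entries in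
increasing order. -/
def maxPermVal (n : ℕ) (i : Fin n) : Fin n :=
  if h1 : (i : ℕ) < (n - 1) / 2 then
    ⟨2 * ((n - 1) / 2) - 2 * (i : ℕ) - 1, by omega⟩
  else if h2 : (i : ℕ) = (n - 1) / 2 then
    ⟨n - 1, by have := i.isLt; omega⟩
  else
    ⟨2 * ((i : ℕ) - (n - 1) / 2 - 1), by have := i.isLt; omega⟩

def p231 : Equiv.Perm (Fin 3) :=
  ⟨![1, 2, 0], ![2, 0, 1], by decide, by decide⟩

def p132 : Equiv.Perm (Fin 3) :=
  ⟨![0, 2, 1], ![0, 2, 1], by decide, by decide⟩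

def p2413 : Equiv.Perm (Fin 4) :=
  ⟨![1, 3, 0, 2], ![2, 0, 3, 1], by decide, by decide⟩

def p2431 : Equiv.Perm (Fin 4) :=
  ⟨![1, 3, 2, 0], ![3, 0, 2, 1], by decide, by decide⟩

def p23154 : Equiv.Perm (Fin 5) :=
  ⟨![1, 2, 0, 4, 3], ![2, 0, 1, 4, 3], by decide, by decide⟩

def p24153 : Equiv.Perm (Fin 5) :=
  ⟨![1, 3, 0, 4, 2], ![2, 0, 4, 1, 3], by decide, by decide⟩

def p24513 : Equiv.Perm (Fin 5) :=
  ⟨![1, 3, 4, 0, 2], ![3, 0, 4, 1, 2], by decide, by decide⟩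

def p24531 : Equiv.Perm (Fin 5) :=
  ⟨![1, 3, 4, 2, 0], ![4, 0, 3, 1, 2], by decide, by decide⟩

def p42513 : Equiv.Perm (Fin 5) :=
  ⟨![3, 1, 4, 0, 2], ![3, 1, 4, 0, 2], by decide, by decide⟩

def p42531 : Equiv.Perm (Fin 5) :=
  ⟨![3, 1, 4, 2, 0], ![4, 1, 3, 0, 2], by decide, by decide⟩

def p231564 : Equiv.Perm (Fin 6) :=
  ⟨![1, 2, 0, 4, 5, 3], ![2, 0, 1, 5, 3, 4], by decide, by decide⟩

def p261453 : Equiv.Perm (Fin 6) :=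
  ⟨![1, 5, 0, 3, 4, 2], ![2, 0, 5, 3, 4, 1], by decide, by decide⟩

def p523164 : Equiv.Perm (Fin 6) :=
  ⟨![4, 1, 2, 0, 5, 3], ![3, 1, 2, 5, 0, 4], by decide, by decide⟩

def p562413 : Equiv.Perm (Fin 6) :=
  ⟨![4, 5, 1, 3, 0, 2], ![4, 2, 5, 3, 0, 1], by decide, by decide⟩

def p562431 : Equiv.Perm (Fin 6) :=
  ⟨![4, 5, 1, 3, 2, 0], ![5, 2, 4, 3, 0, 1], by decide, by decide⟩

def p6723154 : Equiv.Perm (Fin 7) :=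
  ⟨![5, 6, 1, 2, 0, 4, 3], ![4, 2, 3, 6, 5, 0, 1], by decide, by decide⟩

def p4321 : Equiv.Perm (Fin 4) :=
  ⟨![3, 2, 1, 0], ![3, 2, 1, 0], by decide, by decide⟩

def p4213 : Equiv.Perm (Fin 4) :=
  ⟨![3, 1, 0, 2], ![2, 1, 3, 0], by decide, by decide⟩

/-! ### Removing the first entry of a permutation -/

/-- The permutation of length `n + 1` with first entry `p` whose remaining entries are order
isomorphic to `τ`. -/
def permCons {n : ℕ} (x : Fin (n + 1) × Equiv.Perm (Fin n)) : Equiv.Perm (Fin (n + 1)) :=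
  ((finSuccEquiv' 0).trans (Equiv.optionCongr x.2)).trans (finSuccEquiv' x.1).symm

lemma permCons_zero {n : ℕ} (p : Fin (n + 1)) (τ : Equiv.Perm (Fin n)) :
    permCons (p, τ) 0 = p := by
  simp [permCons]

lemma permCons_succ {n : ℕ} (p : Fin (n + 1)) (τ : Equiv.Perm (Fin n)) (i : Fin n) :
    permCons (p, τ) i.succ = p.succAbove (τ i) := by
  have h : finSuccEquiv' (0 : Fin (n + 1)) i.succ = some i := by
    rw [← Fin.succAbove_zero_apply, finSuccEquiv'_succAbove]
  simp [permCons, h]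

lemma permCons_bijective (n : ℕ) : Function.Bijective (permCons (n := n)) := by
  rw [Fintype.bijective_iff_injective_and_card]
  constructor
  · rintro ⟨p, τ⟩ ⟨q, ρ⟩ h
    obtain rfl : p = q := by rw [← permCons_zero p τ, h, permCons_zero]
    congr 1
    ext i
    have := congrArg (fun e => e i.succ) h
    simp only [permCons_succ] at this
    rw [Fin.succAbove_right_injective this]
  · simp [Fintype.card_perm, Nat.factorial_succ]

/-! ### Alternation conditions and their recursion -/

/-- Alternating permutations; the first step is a descent iff `d = true`. -/
def Alt (d : Bool) {n : ℕ} (π : Equiv.Perm (Fin n)) : Prop :=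
  ∀ (i : ℕ) (h : i + 1 < n),
    if (i % 2 = 0 ↔ d = true) then π ⟨i + 1, h⟩ < π ⟨i, by omega⟩
    else π ⟨i, by omega⟩ < π ⟨i + 1, h⟩

/-- In terms of the positions `τ = σ⁻¹`: all pairs `(i, i+1)` with `i + 2 < n` are separated, with
alternating orientations, and the first one is down oriented iff `d = true`. -/
def SepAlt (d : Bool) {n : ℕ} (τ : Equiv.Perm (Fin n)) : Prop :=
  ∀ (i : ℕ) (h : i + 2 < n),
    if (i % 2 = 0 ↔ d = true) then
      ∃ b : Fin n, i + 1 < (b : ℕ) ∧ τ ⟨i + 1, by omega⟩ < τ b ∧ τ b < τ ⟨i, by omega⟩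
    else
      ∃ b : Fin n, i + 1 < (b : ℕ) ∧ τ ⟨i, by omega⟩ < τ b ∧ τ b < τ ⟨i + 1, by omega⟩

lemma parity_flip (i : ℕ) (d : Bool) :
    ((i + 1) % 2 = 0 ↔ d = true) ↔ (i % 2 = 0 ↔ (!d) = true) := by
  cases d <;> simp <;> omega

lemma succAbove_val {n : ℕ} (p : Fin (n + 1)) (i : Fin n) :
    (p.succAbove i : ℕ) = if (i : ℕ) < p then (i : ℕ) else i + 1 := by
  simp only [Fin.succAbove, Fin.lt_def, Fin.val_castSucc]
  split_ifs <;> simp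

lemma alt_cons {n : ℕ} (d : Bool) (p : Fin (n + 2)) (π : Equiv.Perm (Fin (n + 1))) :
    Alt d (permCons (p, π)) ↔
      Alt (!d) π ∧ if d = true then (π 0 : ℕ) < p else (p : ℕ) ≤ π 0 := by
  have h0 : permCons (p, π) ⟨0, by omega⟩ = p := permCons_zero p π
  have hs : ∀ (i : ℕ) (h : i + 1 < n + 2),
      permCons (p, π) ⟨i + 1, h⟩ = p.succAbove (π ⟨i, by omega⟩) :=
    fun i h => permCons_succ p π ⟨i, by omega⟩
  have hzero : (if (0 % 2 = 0 ↔ d = true) then p.succAbove (π 0) < p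
      else p < p.succAbove (π 0)) ↔ if d = true then (π 0 : ℕ) < p else (p : ℕ) ≤ π 0 := by
    simp only [Fin.lt_def, succAbove_val]
    cases d
    · simp only [Bool.false_eq_true, iff_false, not_true_eq_false, if_false]
      split_ifs <;> omega
    · simp only [if_true]
      split_ifs <;> omega
  constructor
  · intro H
    refine ⟨fun i h => ?_, ?_⟩
    · have := H (i + 1) (by omega)
      simpa only [parity_flip, hs, Fin.succAbove_lt_succAbove_iff] using this
    · have := H 0 (by omega)
      rw [hs, h0] at this
      exact hzero.1 this
  · rintro ⟨H, H0⟩ i h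
    rcases i with _ | i
    · rw [hs, h0]
      exact hzero.2 H0
    · have := H i (by omega)
      simpa only [parity_flip, hs, Fin.succAbove_lt_succAbove_iff] using this

/-- Any position strictly between those of the values `0` and `1` carries a value `> 1`, so that
`(0, 1)` is separated as soon as the two positions are not adjacent. -/
lemma sepAlt_cons {n : ℕ} (d : Bool) (p : Fin (n + 3)) (τ : Equiv.Perm (Fin (n + 2))) :
    SepAlt d (permCons (p, τ)) ↔
      SepAlt (!d) τ ∧ if d = true then (τ 0 : ℕ) + 1 < p else (p : ℕ) < τ 0 := by
  have h0 : permCons (p, τ) ⟨0, by omega⟩ = p := permCons_zero p τ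
  have hs : ∀ (i : ℕ) (h : i + 1 < n + 3),
      permCons (p, τ) ⟨i + 1, h⟩ = p.succAbove (τ ⟨i, by omega⟩) :=
    fun i h => permCons_succ p τ ⟨i, by omega⟩
  have hex : ∀ (i : ℕ) (Q : Fin (n + 3) → Prop),
      (∃ b : Fin (n + 3), i + 1 < (b : ℕ) ∧ Q (permCons (p, τ) b)) ↔
        ∃ b : Fin (n + 2), i < (b : ℕ) ∧ Q (p.succAbove (τ b)) := by
    intro i Q
    rw [Fin.exists_fin_succ]
    simp [permCons_succ]
  have hsucc : ∀ (i : ℕ) (_ : i + 2 < n + 2),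
      ((if ((i + 1) % 2 = 0 ↔ d = true) then
        ∃ b : Fin (n + 3), i + 1 + 1 < (b : ℕ) ∧ permCons (p, τ) ⟨i + 1 + 1, by omega⟩ <
          permCons (p, τ) b ∧ permCons (p, τ) b < permCons (p, τ) ⟨i + 1, by omega⟩
      else
        ∃ b : Fin (n + 3), i + 1 + 1 < (b : ℕ) ∧ permCons (p, τ) ⟨i + 1, by omega⟩ <
          permCons (p, τ) b ∧ permCons (p, τ) b < permCons (p, τ) ⟨i + 1 + 1, by omega⟩) ↔
      (if (i % 2 = 0 ↔ (!d) = true) then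
        ∃ b : Fin (n + 2), i + 1 < (b : ℕ) ∧ τ ⟨i + 1, by omega⟩ < τ b ∧ τ b < τ ⟨i, by omega⟩
      else
        ∃ b : Fin (n + 2), i + 1 < (b : ℕ) ∧ τ ⟨i, by omega⟩ < τ b ∧ τ b < τ ⟨i + 1, by omega⟩)) := by
    intro i h
    rw [hex (i + 1) (fun x => permCons (p, τ) ⟨i + 1 + 1, by omega⟩ < x ∧
        x < permCons (p, τ) ⟨i + 1, by omega⟩),
      hex (i + 1) (fun x => permCons (p, τ) ⟨i + 1, by omega⟩ < x ∧
        x < permCons (p, τ) ⟨i + 1 + 1, by omega⟩)]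
    simp only [parity_flip, hs, Fin.succAbove_lt_succAbove_iff]
  have hzero : (if (0 % 2 = 0 ↔ d = true) then
        ∃ b : Fin (n + 3), 0 + 1 < (b : ℕ) ∧ permCons (p, τ) ⟨0 + 1, by omega⟩ <
          permCons (p, τ) b ∧ permCons (p, τ) b < permCons (p, τ) ⟨0, by omega⟩
      else
        ∃ b : Fin (n + 3), 0 + 1 < (b : ℕ) ∧ permCons (p, τ) ⟨0, by omega⟩ <
          permCons (p, τ) b ∧ permCons (p, τ) b < permCons (p, τ) ⟨0 + 1, by omega⟩) ↔
      if d = true then (τ 0 : ℕ) + 1 < p else (p : ℕ) < τ 0 := by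
    rw [hex 0 (fun x => permCons (p, τ) ⟨0 + 1, by omega⟩ < x ∧
        x < permCons (p, τ) ⟨0, by omega⟩),
      hex 0 (fun x => permCons (p, τ) ⟨0, by omega⟩ < x ∧
        x < permCons (p, τ) ⟨0 + 1, by omega⟩)]
    simp only [hs, h0, Fin.lt_def, succAbove_val]
    have hτ0 := (τ 0).isLt
    have hp := p.isLt
    have hz : (⟨0, by omega⟩ : Fin (n + 2)) = 0 := rfl
    rw [hz]
    -- `τ` takes any value different from `τ 0` at a nonzero index
    have hpre : ∀ v : ℕ, v < n + 2 → v ≠ τ 0 →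
        ∃ b : Fin (n + 2), 0 < (b : ℕ) ∧ (τ b : ℕ) = v := by
      intro v hv hne
      refine ⟨τ.symm ⟨v, hv⟩, Nat.pos_of_ne_zero fun hb => hne ?_, by simp⟩
      have : τ.symm ⟨v, hv⟩ = 0 := Fin.ext hb
      rw [← this]; simp
    cases d
    · simp only [Bool.false_eq_true, iff_false, not_true_eq_false, if_false]
      constructor
      · rintro ⟨b, hb, h1, h2⟩
        split_ifs at h1 h2 <;> omega
      · intro h
        obtain ⟨b, hb, hv⟩ := hpre (τ 0 - 1) (by omega) (by omega)
        refine ⟨b, hb, ?_⟩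
        rw [hv]
        constructor <;> split_ifs <;> omega
    · simp only [if_true]
      constructor
      · rintro ⟨b, hb, h1, h2⟩
        split_ifs at h1 h2 <;> omega
      · intro h
        obtain ⟨b, hb, hv⟩ := hpre (τ 0 + 1) (by omega) (by omega)
        refine ⟨b, hb, ?_⟩
        rw [hv]
        constructor <;> split_ifs <;> omega
  constructor
  · exact fun H => ⟨fun i h => (hsucc i h).1 (H (i + 1) (by omega)), hzero.1 (H 0 (by omega))⟩
  · rintro ⟨H, H0⟩ i h
    rcases i with _ | i
    · exact hzero.2 H0
    · exact (hsucc i (by omega)).2 (H i (by omega))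

/-! ### Counting by the first entry -/

/-- Counting permutations by their first entry and the standardisation of the rest. -/
lemma card_eq_sum_cons {n : ℕ} (P : Equiv.Perm (Fin (n + 1)) → Prop) :
    Nat.card {τ // P τ} =
      ∑ p : Fin (n + 1), Nat.card {τ : Equiv.Perm (Fin n) // P (permCons (p, τ))} := by
  rw [← Nat.card_sigma]
  exact Nat.card_congr (((Equiv.ofBijective _ (permCons_bijective n)).subtypeEquiv
    (fun _ => Iff.rfl)).symm.trans
      (Equiv.subtypeProdEquivSigmaSubtype fun p τ => P (permCons (p, τ))))

/-- Equality of the number of `τ` of length `m + 2` and `π` of length `m + 1` satisfying the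
respective alternation conditions, where `τ 0` and `π 0 + d.toNat` are required to lie in `S`. -/
def CountEq (d : Bool) (m : ℕ) (S : ℕ → Prop) : Prop :=
  Nat.card {τ : Equiv.Perm (Fin (m + 2)) // SepAlt d τ ∧ S (τ 0)} =
    Nat.card {π : Equiv.Perm (Fin (m + 1)) // Alt d π ∧ S (π 0 + d.toNat)}

/-- Among the possible first entries `k < m + 2` of `τ`, `S` only contains values of the form
`π 0 + d.toNat` with `π` of length `m + 1`. -/
def Admissible (d : Bool) (m : ℕ) (S : ℕ → Prop) : Prop :=
  ∀ k, k < m + 2 → S k → if d = true then 0 < k else k < m + 1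

/-- For length at least `3` the alternation conditions already force the first entry of `τ` to be
admissible, hence no hypothesis on `S`; admissibility is only needed to start the induction. -/
lemma count_step (d : Bool) (m : ℕ) (ih : ∀ S, Admissible (!d) m S → CountEq (!d) m S)
    (S : ℕ → Prop) : CountEq d (m + 1) S := by
  unfold CountEq
  rw [card_eq_sum_cons, card_eq_sum_cons]
  simp only [sepAlt_cons, alt_cons, permCons_zero]
  cases d
  · -- the largest first entry `m + 2` of `τ` does not occur
    rw [Fin.sum_univ_castSucc]
    have hlast : Nat.card {τ : Equiv.Perm (Fin (m + 2)) // (SepAlt (!false) τ ∧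
        if false = true then (τ 0 : ℕ) + 1 < (Fin.last (m + 2) : ℕ)
          else (Fin.last (m + 2) : ℕ) < τ 0) ∧ S (Fin.last (m + 2) : ℕ)} = 0 := by
      rw [Nat.card_eq_zero]
      left
      refine ⟨fun ⟨τ, ⟨_, h⟩, _⟩ => ?_⟩
      have := (τ 0).isLt
      simp at h
      omega
    rw [hlast, add_zero]
    refine Finset.sum_congr rfl fun p _ => ?_
    have := ih (fun k => (p : ℕ) < k ∧ S p) (fun k _ h => by simp; omega)
    unfold CountEq at this
    simpa [and_assoc, Nat.lt_succ_iff] using this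
  · -- the first entry `0` of `τ` does not occur
    rw [Fin.sum_univ_succ]
    have hzero : Nat.card {τ : Equiv.Perm (Fin (m + 2)) // (SepAlt (!true) τ ∧
        if true = true then (τ 0 : ℕ) + 1 < ((0 : Fin (m + 3)) : ℕ)
          else ((0 : Fin (m + 3)) : ℕ) < τ 0) ∧ S ((0 : Fin (m + 3)) : ℕ)} = 0 := by
      rw [Nat.card_eq_zero]
      left
      exact ⟨fun ⟨τ, ⟨_, h⟩, _⟩ => by simp at h⟩
    rw [hzero, zero_add]
    refine Finset.sum_congr rfl fun p _ => ?_
    have := ih (fun k => k < (p : ℕ) ∧ S (p + 1)) (fun k _ h => by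
      have := p.isLt
      simp; omega)
    unfold CountEq at this
    simpa [and_assoc] using this

lemma count_zero (d : Bool) (S : ℕ → Prop) (hS : Admissible d 0 S) : CountEq d 0 S := by
  unfold CountEq
  have hP : ∀ τ : Equiv.Perm (Fin 2), SepAlt d τ := fun τ i h => by omega
  have hA : ∀ π : Equiv.Perm (Fin 1), Alt d π := fun π i h => by omega
  simp only [Nat.reduceAdd, hP, hA, true_and]
  rw [card_eq_sum_cons, card_eq_sum_cons]
  simp only [permCons_zero]
  have h0 := hS 0 (by omega)
  have h1 := hS 1 (by omega)
  cases d
  · have : ¬ S 1 := fun h => by simpa using h1 h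
    by_cases hS0 : S 0 <;> simp [this, hS0]
  · have : ¬ S 0 := fun h => by simpa using h0 h
    by_cases hS1 : S 1 <;> simp [this, hS1]

lemma count_eq (m : ℕ) : ∀ (d : Bool) (S : ℕ → Prop), Admissible d m S → CountEq d m S := by
  induction m with
  | zero => exact count_zero
  | succ m ih => exact fun d S _ => count_step d m (ih _) S

/-! ### Maximal rev-tier -/

/-- An alternating chain of separated pairs only uses the pairs `(a, a+1)` with `a + 2 < n`. -/
lemma AltChain.add_two_lt {n t : ℕ} {σ : Equiv.Perm (Fin n)} {f : Fin t → Fin n}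
    (hf : AltChain σ true f) (j : Fin t) : (f j : ℕ) + 2 < n := by
  have h := hf.2 j
  split_ifs at h
  · obtain ⟨_, _, p, _, _, hp⟩ := h
    have := (σ p).isLt
    omega
  · obtain ⟨_, _, p, _, _, hp⟩ := h
    have := (σ p).isLt
    omega

lemma AltChain.length_le {n t : ℕ} {σ : Equiv.Perm (Fin n)} {f : Fin t → Fin n}
    (hf : AltChain σ true f) : t ≤ n - 2 := by
  have hinj : Function.Injective
      (fun j => (⟨f j, by have := hf.add_two_lt j; omega⟩ : Fin (n - 2))) := by
    intro i j h
    exact hf.1.injective (Fin.ext (by simpa using h))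
  simpa using Fintype.card_le_of_injective _ hinj

lemma downSepPair_iff {n : ℕ} (σ : Equiv.Perm (Fin n)) (i : ℕ) (h : i + 2 < n) :
    DownSepPair σ ⟨i, by omega⟩ ↔ ∃ b : Fin n, i + 1 < (b : ℕ) ∧
      σ.symm ⟨i + 1, by omega⟩ < σ.symm b ∧ σ.symm b < σ.symm ⟨i, by omega⟩ := by
  constructor
  · rintro ⟨_, _, p, h1, h2, h3⟩
    exact ⟨σ p, h3, by simpa using h1, by simpa using h2⟩
  · rintro ⟨b, h3, h1, h2⟩
    exact ⟨by simp; omega, h1.trans h2, σ.symm b, h1, h2, by simpa using h3⟩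

lemma upSepPair_iff {n : ℕ} (σ : Equiv.Perm (Fin n)) (i : ℕ) (h : i + 2 < n) :
    UpSepPair σ ⟨i, by omega⟩ ↔ ∃ b : Fin n, i + 1 < (b : ℕ) ∧
      σ.symm ⟨i, by omega⟩ < σ.symm b ∧ σ.symm b < σ.symm ⟨i + 1, by omega⟩ := by
  constructor
  · rintro ⟨_, _, p, h1, h2, h3⟩
    exact ⟨σ p, h3, by simpa using h1, by simpa using h2⟩
  · rintro ⟨b, h3, h1, h2⟩
    exact ⟨by simp; omega, h1.trans h2, σ.symm b, h1, h2, by simpa using h3⟩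

/-- The only alternating chain that can have length `n - 2` is `0, 1, …, n - 3`. -/
lemma altChain_iff {n : ℕ} (σ : Equiv.Perm (Fin n)) :
    (∃ f : Fin (n - 2) → Fin n, AltChain σ true f) ↔ SepAlt true σ.symm := by
  constructor
  · rintro ⟨f, hf⟩ i h
    let g : Fin (n - 2) → Fin (n - 2) :=
      fun j => ⟨f j, by have := hf.add_two_lt j; omega⟩
    have hg : StrictMono g := fun a b hab => hf.1 hab
    have hid : ∀ j, g j = j := fun j => le_antisymm hg.apply_le hg.le_apply
    have hfi : f ⟨i, by omega⟩ = ⟨i, by omega⟩ := by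
      have := congrArg Fin.val (hid ⟨i, by omega⟩)
      exact Fin.ext this
    have := hf.2 ⟨i, by omega⟩
    rw [hfi, downSepPair_iff σ i h, upSepPair_iff σ i h] at this
    exact this
  · intro H
    refine ⟨fun j => ⟨j, by omega⟩, fun a b hab => hab, fun j => ?_⟩
    have hj : (j : ℕ) + 2 < n := by omega
    rw [downSepPair_iff σ j hj, upSepPair_iff σ j hj]
    exact H j hj

lemma revTier_eq_iff {n : ℕ} (σ : Equiv.Perm (Fin n)) :
    revTier σ = n - 2 ↔ SepAlt true σ.symm := by
  rw [← altChain_iff]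
  have hne : {t : ℕ | ∃ f : Fin t → Fin n, AltChain σ true f}.Nonempty :=
    ⟨0, Fin.elim0, fun a => a.elim0, fun a => a.elim0⟩
  have hub : ∀ t ∈ {t : ℕ | ∃ f : Fin t → Fin n, AltChain σ true f}, t ≤ n - 2 :=
    fun t ⟨_, hf⟩ => hf.length_le
  constructor
  · intro h
    have := Nat.sSup_mem hne ⟨_, hub⟩
    change revTier σ ∈ _ at this
    rw [h] at this
    exact this
  · exact fun h => le_antisymm (csSup_le hne hub) (le_csSup ⟨_, hub⟩ h)

/-- for `n ≥ 3`, the number of permutations of length `n` with maximal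
rev-tier `n-2` equals the Euler number `E_{n-1}`, the number of down-up alternating
permutations of length `n-1`. -/
theorem maximal_revTier_euler (n : ℕ) (hn : 3 ≤ n) :
    Nat.card {σ : Equiv.Perm (Fin n) // revTier σ = n - 2}
      = Nat.card {π : Equiv.Perm (Fin (n - 1)) // DownUp π} := by
  obtain ⟨m, rfl⟩ : ∃ m, n = m + 3 := ⟨n - 3, by omega⟩
  have key := count_step true m (count_eq m _) (fun _ => True)
  simp only [CountEq, and_true] at key
  have h1 : Nat.card {σ : Equiv.Perm (Fin (m + 3)) // revTier σ = m + 3 - 2} =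
      Nat.card {τ : Equiv.Perm (Fin (m + 3)) // SepAlt true τ} :=
    Nat.card_congr ((Equiv.symmEquiv _ _).subtypeEquiv fun σ => revTier_eq_iff σ)
  have h2 : ∀ π : Equiv.Perm (Fin (m + 2)), Alt true π ↔ DownUp π := by
    intro π
    simp only [Alt, DownUp, iff_true]
  rw [h1]
  simp only [← h2]
  exact key
end

section
/- The following recurrences hold for all n ≥ 1 and 1 ≤ k ≤ n+1 (all sums over i range over 1 ≤ i ≤ n): η(n+1,k) = η(n,k) + η(n,k−1); μ_U(n+1,0,k) = Σ_{i ≥ k+1} η(n,i) + Σ_{i ≥ k−1} μ_U(n,0,i); for t ≥ 1, μ_U(n+1,t,k) = Σ_{i ≥ k+1} μ_D(n,t,i) + Σ_{i ≥ k−1} μ_U(n,t,i); μ_D(n+1,1,k) = Σ_{i ≤ k−2} η(n,i) + Σ_{i ≤ k} μ_D(n,1,i); and for t ≥ 2, μ_D(n+1,t,k) = Σ_{i ≤ k−2} μ_U(n,t−2,i) + Σ_{i ≤ k} μ_D(n,t,i). -/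
/-! ### Inserting a new smallest entry -/

/-- The permutation obtained from `τ` by raising every value by one and inserting the new
smallest value `0` at position `p`. -/
def insertMin {n : ℕ} (p : Fin (n + 1)) (τ : Equiv.Perm (Fin n)) : Equiv.Perm (Fin (n + 1)) :=
  (finSuccEquiv' p).trans ((Equiv.optionCongr τ).trans (finSuccEquiv' 0).symm)

lemma insertMin_self {n : ℕ} (p : Fin (n + 1)) (τ : Equiv.Perm (Fin n)) :
    insertMin p τ p = 0 := by
  simp [insertMin]

lemma insertMin_succAbove {n : ℕ} (p : Fin (n + 1)) (τ : Equiv.Perm (Fin n)) (j : Fin n) :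
    insertMin p τ (p.succAbove j) = (τ j).succ := by
  simp [insertMin]

lemma insertMin_symm_zero {n : ℕ} (p : Fin (n + 1)) (τ : Equiv.Perm (Fin n)) :
    (insertMin p τ).symm 0 = p := by
  rw [Equiv.symm_apply_eq, insertMin_self]

lemma insertMin_symm_succ {n : ℕ} (p : Fin (n + 1)) (τ : Equiv.Perm (Fin n)) (a : Fin n) :
    (insertMin p τ).symm a.succ = p.succAbove (τ.symm a) := by
  rw [Equiv.symm_apply_eq, insertMin_succAbove, Equiv.apply_symm_apply]

lemma insertMin_injective {n : ℕ} (p : Fin (n + 1)) :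
    Function.Injective (insertMin (n := n) p) := by
  intro τ τ' h
  ext j
  have h1 := insertMin_succAbove p τ j
  rw [h, insertMin_succAbove] at h1
  rw [Fin.succ_injective _ h1]

lemma exists_insertMin {n : ℕ} (p : Fin (n + 1)) (σ : Equiv.Perm (Fin (n + 1)))
    (h : σ.symm 0 = p) : ∃ τ, insertMin p τ = σ := by
  have hp : σ p = 0 := by rw [← h, Equiv.apply_symm_apply]
  have hne : ∀ j, σ (p.succAbove j) ≠ 0 := fun j hj =>
    p.succAbove_ne j (σ.injective (hj.trans hp.symm))
  have hinj : Function.Injective fun j => (σ (p.succAbove j)).pred (hne j) := by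
    intro j j' hjj
    simpa using hjj
  refine ⟨Equiv.ofBijective _ (Finite.injective_iff_bijective.1 hinj), ?_⟩
  ext x
  rcases Fin.eq_self_or_eq_succAbove p x with rfl | ⟨j, rfl⟩
  · rw [insertMin_self, hp]
  · rw [insertMin_succAbove]; simp

/-- Permutations of length `n + 1` with entry `1` in position `k` are exactly the insertions of
a new minimum at that position into permutations of length `n`. -/
lemma card_onePos_succ {n : ℕ} (k : ℕ) (hk : 1 ≤ k) (hkn : k ≤ n + 1)
    (P : Equiv.Perm (Fin (n + 1)) → Prop) :
    Nat.card {σ : Equiv.Perm (Fin (n + 1)) // P σ ∧ onePos σ k} =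
      Nat.card {τ : Equiv.Perm (Fin n) // P (insertMin ⟨k - 1, by omega⟩ τ)} := by
  symm
  refine Nat.card_congr (Equiv.ofBijective
    (fun τ => ⟨insertMin ⟨k - 1, by omega⟩ τ.1, τ.2, ?_⟩) ⟨?_, ?_⟩)
  · intro h
    have := insertMin_symm_zero ⟨k - 1, by omega⟩ τ.1
    change ((insertMin _ τ.1).symm 0 : ℕ) + 1 = k
    rw [this]
    simp; omega
  · intro τ τ' h
    exact Subtype.ext (insertMin_injective _ (congrArg Subtype.val h))
  · rintro ⟨σ, hP, hσ⟩
    have h0 := hσ (Nat.succ_pos n)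
    change (σ.symm 0 : ℕ) + 1 = k at h0
    obtain ⟨τ, hτ⟩ := exists_insertMin ⟨k - 1, by omega⟩ σ (Fin.ext (by simp; omega))
    exact ⟨⟨τ, by rwa [hτ]⟩, Subtype.ext hτ⟩

/-! ### Separated pairs after an insertion -/

/-- `(a, a+1)` is a separated pair of `σ` whose orientation is given by `b`: down oriented for
`b = true`, up oriented for `b = false`. -/
def SepDir {n : ℕ} (σ : Equiv.Perm (Fin n)) (b : Bool) (a : Fin n) : Prop :=
  if b = true then DownSepPair σ a else UpSepPair σ a

lemma SepDir.not_bnot {n : ℕ} {σ : Equiv.Perm (Fin n)} {b : Bool} {a : Fin n}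
    (h : SepDir σ b a) : ¬ SepDir σ (!b) a := by
  intro h'
  cases b
  · obtain ⟨_, h1, -⟩ : UpSepPair σ a := by simpa [SepDir] using h
    obtain ⟨_, h2, -⟩ : DownSepPair σ a := by simpa [SepDir] using h'
    exact absurd h1 h2.asymm
  · obtain ⟨_, h1, -⟩ : DownSepPair σ a := by simpa [SepDir] using h
    obtain ⟨_, h2, -⟩ : UpSepPair σ a := by simpa [SepDir] using h'
    exact absurd h1 h2.asymm

lemma sepPair_iff_exists_sepDir {n : ℕ} (σ : Equiv.Perm (Fin n)) (a : Fin n) :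
    SepPair σ a ↔ ∃ b, SepDir σ b a := by
  simp [SepPair, SepDir]

lemma upSepPair_insertMin_succ {n : ℕ} (p : Fin (n + 1)) (τ : Equiv.Perm (Fin n)) (a : Fin n) :
    UpSepPair (insertMin p τ) a.succ ↔ UpSepPair τ a := by
  have key : ∀ hb : (a : ℕ) + 1 < n, (⟨(a.succ : ℕ) + 1, by simpa using hb⟩ : Fin (n + 1)) =
      Fin.succ ⟨(a : ℕ) + 1, hb⟩ := fun hb => Fin.ext (by simp)
  constructor
  · rintro ⟨hb, h1, x, hx1, hx2, hx3⟩
    have hb' : (a : ℕ) + 1 < n := by simpa using hb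
    rw [key hb', insertMin_symm_succ, insertMin_symm_succ, Fin.succAbove_lt_succAbove_iff] at h1
    rw [insertMin_symm_succ] at hx1
    rw [key hb', insertMin_symm_succ] at hx2
    rcases Fin.eq_self_or_eq_succAbove p x with rfl | ⟨j, rfl⟩
    · simp [insertMin_self] at hx3
    · rw [Fin.succAbove_lt_succAbove_iff] at hx1 hx2
      rw [insertMin_succAbove] at hx3
      exact ⟨hb', h1, j, hx1, hx2, by simpa using hx3⟩
  · rintro ⟨hb, h1, j, hx1, hx2, hx3⟩
    refine ⟨by simpa using hb, ?_, p.succAbove j, ?_, ?_, ?_⟩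
    · rwa [key hb, insertMin_symm_succ, insertMin_symm_succ, Fin.succAbove_lt_succAbove_iff]
    · rwa [insertMin_symm_succ, Fin.succAbove_lt_succAbove_iff]
    · rwa [key hb, insertMin_symm_succ, Fin.succAbove_lt_succAbove_iff]
    · rw [insertMin_succAbove]; simpa using hx3

lemma downSepPair_insertMin_succ {n : ℕ} (p : Fin (n + 1)) (τ : Equiv.Perm (Fin n)) (a : Fin n) :
    DownSepPair (insertMin p τ) a.succ ↔ DownSepPair τ a := by
  have key : ∀ hb : (a : ℕ) + 1 < n, (⟨(a.succ : ℕ) + 1, by simpa using hb⟩ : Fin (n + 1)) =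
      Fin.succ ⟨(a : ℕ) + 1, hb⟩ := fun hb => Fin.ext (by simp)
  constructor
  · rintro ⟨hb, h1, x, hx1, hx2, hx3⟩
    have hb' : (a : ℕ) + 1 < n := by simpa using hb
    rw [key hb', insertMin_symm_succ, insertMin_symm_succ, Fin.succAbove_lt_succAbove_iff] at h1
    rw [key hb', insertMin_symm_succ] at hx1
    rw [insertMin_symm_succ] at hx2
    rcases Fin.eq_self_or_eq_succAbove p x with rfl | ⟨j, rfl⟩
    · simp [insertMin_self] at hx3
    · rw [Fin.succAbove_lt_succAbove_iff] at hx1 hx2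
      rw [insertMin_succAbove] at hx3
      exact ⟨hb', h1, j, hx1, hx2, by simpa using hx3⟩
  · rintro ⟨hb, h1, j, hx1, hx2, hx3⟩
    refine ⟨by simpa using hb, ?_, p.succAbove j, ?_, ?_, ?_⟩
    · rwa [key hb, insertMin_symm_succ, insertMin_symm_succ, Fin.succAbove_lt_succAbove_iff]
    · rwa [key hb, insertMin_symm_succ, Fin.succAbove_lt_succAbove_iff]
    · rwa [insertMin_symm_succ, Fin.succAbove_lt_succAbove_iff]
    · rw [insertMin_succAbove]; simpa using hx3

lemma sepDir_insertMin_succ {n : ℕ} (p : Fin (n + 1)) (τ : Equiv.Perm (Fin n)) (b : Bool)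
    (a : Fin n) : SepDir (insertMin p τ) b a.succ ↔ SepDir τ b a := by
  simp [SepDir, upSepPair_insertMin_succ, downSepPair_insertMin_succ]

/-- Every entry other than the two smallest ones has value `> 1`. -/
lemma one_lt_insertMin {n : ℕ} (hn : 0 < n) (p : Fin (n + 1)) (τ : Equiv.Perm (Fin n))
    (x : Fin (n + 1)) (h0 : x ≠ p) (h1 : x ≠ p.succAbove (τ.symm ⟨0, hn⟩)) :
    1 < (insertMin p τ x : ℕ) := by
  obtain ⟨j, rfl⟩ := Fin.exists_succAbove_eq h0
  rw [insertMin_succAbove]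
  have : τ j ≠ ⟨0, hn⟩ := fun h => h1 (by rw [← h, Equiv.symm_apply_apply])
  have h2 : (τ j : ℕ) ≠ 0 := fun h => this (Fin.ext h)
  simp; omega

/-- The new pair `(0, 1)` is up oriented and separated exactly when the old minimum lies to the
right of the inserted one and is not adjacent to it. -/
lemma upSepPair_insertMin_zero {n : ℕ} (hn : 0 < n) (p : Fin (n + 1)) (τ : Equiv.Perm (Fin n)) :
    UpSepPair (insertMin p τ) 0 ↔ (p : ℕ) + 1 ≤ (τ.symm ⟨0, hn⟩ : ℕ) := by
  have key : ∀ hb : ((0 : Fin (n + 1)) : ℕ) + 1 < n + 1,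
      (insertMin p τ).symm ⟨((0 : Fin (n + 1)) : ℕ) + 1, hb⟩ =
        p.succAbove (τ.symm ⟨0, hn⟩) := fun hb => by
    rw [← insertMin_symm_succ]; congr 1
  set q := τ.symm ⟨0, hn⟩ with hq
  constructor
  · rintro ⟨hb, h1, x, hx1, hx2, -⟩
    rw [key] at hx2
    rw [insertMin_symm_zero] at hx1
    by_cases h : (q : ℕ) < p
    · rw [Fin.succAbove_of_castSucc_lt _ _ h] at hx2
      simp only [Fin.lt_def, Fin.val_castSucc] at hx1 hx2; omega
    · rw [Fin.succAbove_of_le_castSucc _ _ (by simpa [Fin.le_def] using h)] at hx2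
      simp only [Fin.lt_def, Fin.val_succ] at hx1 hx2; omega
  · intro h
    have hs : p.succAbove q = q.succ :=
      Fin.succAbove_of_le_castSucc _ _ (by simp [Fin.le_def]; omega)
    have hqn := q.isLt
    refine ⟨by simpa using hn, ?_, ⟨p + 1, by omega⟩, ?_, ?_, ?_⟩
    · rw [key, insertMin_symm_zero, hs, Fin.lt_def, Fin.val_succ]; omega
    · rw [insertMin_symm_zero, Fin.lt_def]; simp
    · rw [key, hs, Fin.lt_def, Fin.val_succ]; simp; omega
    · refine one_lt_insertMin hn p τ _ (by simp [Fin.ext_iff]) ?_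
      rw [← hq, hs]; simp [Fin.ext_iff]; omega

/-- The new pair `(0, 1)` is down oriented and separated exactly when the old minimum lies to the
left of the inserted one and is not adjacent to it. -/
lemma downSepPair_insertMin_zero {n : ℕ} (hn : 0 < n) (p : Fin (n + 1))
    (τ : Equiv.Perm (Fin n)) :
    DownSepPair (insertMin p τ) 0 ↔ (τ.symm ⟨0, hn⟩ : ℕ) + 2 ≤ p := by
  have key : ∀ hb : ((0 : Fin (n + 1)) : ℕ) + 1 < n + 1,
      (insertMin p τ).symm ⟨((0 : Fin (n + 1)) : ℕ) + 1, hb⟩ =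
        p.succAbove (τ.symm ⟨0, hn⟩) := fun hb => by
    rw [← insertMin_symm_succ]; congr 1
  set q := τ.symm ⟨0, hn⟩ with hq
  constructor
  · rintro ⟨hb, h1, x, hx1, hx2, -⟩
    rw [key] at hx1
    rw [insertMin_symm_zero] at hx2
    by_cases h : (q : ℕ) < p
    · rw [Fin.succAbove_of_castSucc_lt _ _ h] at hx1
      simp only [Fin.lt_def, Fin.val_castSucc] at hx1 hx2; omega
    · rw [Fin.succAbove_of_le_castSucc _ _ (by simpa [Fin.le_def] using h)] at hx1
      simp only [Fin.lt_def, Fin.val_succ] at hx1 hx2; omega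
  · intro h
    have hs : p.succAbove q = q.castSucc :=
      Fin.succAbove_of_castSucc_lt _ _ (by simp [Fin.lt_def]; omega)
    have hqn := q.isLt
    refine ⟨by simpa using hn, ?_, ⟨q + 1, by omega⟩, ?_, ?_, ?_⟩
    · rw [key, insertMin_symm_zero, hs, Fin.lt_def, Fin.val_castSucc]; omega
    · rw [key, hs, Fin.lt_def, Fin.val_castSucc]; simp
    · rw [insertMin_symm_zero, Fin.lt_def]; simp; omega
    · refine one_lt_insertMin hn p τ _ (by simp [Fin.ext_iff]; omega) ?_
      rw [← hq, hs]; simp [Fin.ext_iff]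

/-! ### Alternating chains and their maximal lengths -/

lemma altChain_iff_s16 {n : ℕ} (σ : Equiv.Perm (Fin n)) (b : Bool) {t : ℕ} (f : Fin t → Fin n) :
    AltChain σ b f ↔
      StrictMono f ∧ ∀ j : Fin t, SepDir σ (decide ((j : ℕ) % 2 = 0 ↔ b = true)) (f j) := by
  simp only [AltChain, SepDir, decide_eq_true_eq]

/-- An alternating chain is a separated pair of the prescribed orientation followed by a chain of
larger pairs that starts with the opposite orientation. -/
lemma altChain_succ_iff {n : ℕ} (σ : Equiv.Perm (Fin n)) (b : Bool) {t : ℕ}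
    (f : Fin (t + 1) → Fin n) :
    AltChain σ b f ↔ SepDir σ b (f 0) ∧ (∀ j : Fin t, f 0 < f j.succ) ∧
      AltChain σ (!b) (fun j => f j.succ) := by
  have hdec : ∀ j : ℕ, (decide ((j + 1) % 2 = 0 ↔ b = true)) =
      decide (j % 2 = 0 ↔ (!b) = true) := by
    intro j
    rcases Nat.mod_two_eq_zero_or_one j with h | h <;> cases b <;>
      simp [Nat.add_mod, h]
  have hb : decide (((0 : Fin (t + 1)) : ℕ) % 2 = 0 ↔ b = true) = b := by cases b <;> simp
  rw [altChain_iff_s16, altChain_iff_s16]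
  constructor
  · rintro ⟨hf, h⟩
    refine ⟨?_, fun j => hf j.succ_pos, fun i j hij => hf (by simpa using hij), fun j => ?_⟩
    · have := h 0
      rwa [hb] at this
    · have := h j.succ
      rwa [Fin.val_succ, hdec] at this
  · rintro ⟨h0, hlt, hf, h⟩
    refine ⟨?_, ?_⟩
    · intro i j hij
      induction j using Fin.cases with
      | zero => exact absurd hij (by simp)
      | succ j =>
        induction i using Fin.cases with
        | zero => exact hlt j
        | succ i => exact hf (by simpa using hij)
    · intro j
      induction j using Fin.cases with
      | zero => rwa [hb]
      | succ j => rw [Fin.val_succ, hdec]; exact h j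

/-- `σ` has an alternating chain of length `t` whose first pair has orientation `b`. -/
def HasChain {n : ℕ} (σ : Equiv.Perm (Fin n)) (b : Bool) (t : ℕ) : Prop :=
  ∃ f : Fin t → Fin n, AltChain σ b f

/-- The maximal length of an alternating chain of `σ` whose first pair has orientation `b`; for
`b = true` this is the rev-tier. -/
noncomputable def tier {n : ℕ} (σ : Equiv.Perm (Fin n)) (b : Bool) : ℕ :=
  sSup {t : ℕ | HasChain σ b t}

lemma hasChain_zero {n : ℕ} (σ : Equiv.Perm (Fin n)) (b : Bool) : HasChain σ b 0 :=
  ⟨Fin.elim0, fun i => i.elim0, fun i => i.elim0⟩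

lemma HasChain.le {n : ℕ} {σ : Equiv.Perm (Fin n)} {b : Bool} {t : ℕ} (h : HasChain σ b t) :
    t ≤ n := by
  obtain ⟨f, hf, -⟩ := h
  simpa using Fintype.card_le_of_injective f hf.injective

lemma HasChain.mono {n : ℕ} {σ : Equiv.Perm (Fin n)} {b : Bool} {s t : ℕ} (h : HasChain σ b t)
    (hst : s ≤ t) : HasChain σ b s := by
  obtain ⟨f, hf, h⟩ := h
  exact ⟨fun j => f (Fin.castLE hst j), fun i j hij => hf (by simpa using hij),
    fun j => h (Fin.castLE hst j)⟩

lemma bddAbove_hasChain {n : ℕ} (σ : Equiv.Perm (Fin n)) (b : Bool) :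
    BddAbove {t : ℕ | HasChain σ b t} := ⟨n, fun _ h => h.le⟩

lemma hasChain_iff_le_tier {n : ℕ} (σ : Equiv.Perm (Fin n)) (b : Bool) (t : ℕ) :
    HasChain σ b t ↔ t ≤ tier σ b := by
  constructor
  · exact fun h => le_csSup (bddAbove_hasChain σ b) h
  · exact fun h => HasChain.mono
      (Nat.sSup_mem ⟨0, hasChain_zero σ b⟩ (bddAbove_hasChain σ b)) h

/-- Dropping the first pair of a chain flips the starting orientation. -/
lemma HasChain.tail {n : ℕ} {σ : Equiv.Perm (Fin n)} {b : Bool} {t : ℕ}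
    (h : HasChain σ b (t + 1)) : HasChain σ (!b) t := by
  obtain ⟨f, hf⟩ := h
  exact ⟨_, ((altChain_succ_iff σ b f).1 hf).2.2⟩

lemma tier_le_succ {n : ℕ} (σ : Equiv.Perm (Fin n)) (b : Bool) : tier σ b ≤ tier σ (!b) + 1 := by
  by_contra! h
  have h1 : HasChain σ b (tier σ (!b) + 1 + 1) := (hasChain_iff_le_tier _ _ _).2 h
  have h2 := (hasChain_iff_le_tier _ _ _).1 h1.tail
  omega

/-- The first separated pair of all can be put in front of any chain that starts with the
opposite orientation. -/
lemma tier_succ_le {n : ℕ} (σ : Equiv.Perm (Fin n)) (b : Bool) (a : Fin n) (ha : SepDir σ b a)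
    (hmin : ∀ c, SepPair σ c → a ≤ c) : tier σ (!b) + 1 ≤ tier σ b := by
  rw [← hasChain_iff_le_tier]
  obtain ⟨f, hf⟩ := (hasChain_iff_le_tier σ (!b) _).2 le_rfl
  refine ⟨Fin.cons a f, ?_⟩
  rw [altChain_succ_iff]
  refine ⟨by simpa using ha, fun j => ?_, by simpa using hf⟩
  have hf' := (altChain_iff_s16 _ _ _).1 hf
  have h0 : a < f ⟨0, j.pos⟩ := by
    have h1 := hf'.2 ⟨0, j.pos⟩
    have h2 : decide (0 % 2 = 0 ↔ (!b) = true) = !b := by cases b <;> simp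
    rw [h2] at h1
    refine lt_of_le_of_ne (hmin _ ((sepPair_iff_exists_sepDir _ _).2 ⟨_, h1⟩)) ?_
    intro h
    rw [← h] at h1
    exact ha.not_bnot h1
  simpa using h0.trans_le (hf'.1.monotone (Fin.mk_le_of_le_val (Nat.zero_le _)))

lemma noSepPairs_tier {n : ℕ} {σ : Equiv.Perm (Fin n)} (h : NoSepPairs σ) (b : Bool) :
    tier σ b = 0 := by
  by_contra h0
  obtain ⟨f, hf⟩ := (hasChain_iff_le_tier σ b 1).2 (Nat.one_le_iff_ne_zero.2 h0)
  exact h _ ((sepPair_iff_exists_sepDir _ _).2 ⟨_, ((altChain_succ_iff _ _ _).1 hf).1⟩)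

/-- The two tiers are equal only when there are no separated pairs: otherwise the orientation of
the first separated pair wins. -/
lemma noSepPairs_iff {n : ℕ} (σ : Equiv.Perm (Fin n)) :
    NoSepPairs σ ↔ tier σ true = tier σ false := by
  constructor
  · intro h
    rw [noSepPairs_tier h, noSepPairs_tier h]
  · intro h
    by_contra hns
    have hex : ∃ c, SepPair σ c := by simpa [NoSepPairs] using hns
    obtain ⟨a, ha, hmin⟩ := WellFounded.has_min
      (wellFounded_lt (α := Fin n)) {c | SepPair σ c} hex
    obtain ⟨b, hb⟩ := (sepPair_iff_exists_sepDir _ _).1 ha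
    have := tier_succ_le σ b a hb (fun c hc => not_lt.1 (hmin c hc))
    cases b <;> simp at this <;> omega

lemma maxAltLen_eq {n : ℕ} (σ : Equiv.Perm (Fin n)) :
    maxAltLen σ = max (tier σ true) (tier σ false) := by
  have : IsGreatest {t : ℕ | ∃ b : Bool, ∃ f : Fin t → Fin n, AltChain σ b f}
      (max (tier σ true) (tier σ false)) := by
    constructor
    · rcases le_total (tier σ true) (tier σ false) with h | h
      · rw [max_eq_right h]
        exact ⟨false, (hasChain_iff_le_tier σ false _).2 le_rfl⟩
      · rw [max_eq_left h]
        exact ⟨true, (hasChain_iff_le_tier σ true _).2 le_rfl⟩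
    · rintro t ⟨b, hb⟩
      have := (hasChain_iff_le_tier σ b t).1 hb
      cases b <;> simp [this]
  exact this.csSup_eq

lemma upOriented_iff {n : ℕ} (σ : Equiv.Perm (Fin n)) :
    UpOriented σ ↔ tier σ true < tier σ false := by
  have h := hasChain_iff_le_tier σ true (maxAltLen σ)
  have hm := maxAltLen_eq σ
  unfold UpOriented
  change _ ∧ ¬ HasChain σ true (maxAltLen σ) ↔ _
  rw [h]
  omega

lemma downOriented_iff {n : ℕ} (σ : Equiv.Perm (Fin n)) :
    DownOriented σ ↔ tier σ false < tier σ true := by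
  have h := hasChain_iff_le_tier σ false (maxAltLen σ)
  have hm := maxAltLen_eq σ
  unfold DownOriented
  change _ ∧ ¬ HasChain σ false (maxAltLen σ) ↔ _
  rw [h]
  omega

lemma altChain_insertMin_succ {n : ℕ} (p : Fin (n + 1)) (τ : Equiv.Perm (Fin n)) (b : Bool)
    {t : ℕ} (g : Fin t → Fin n) :
    AltChain (insertMin p τ) b (fun j => (g j).succ) ↔ AltChain τ b g := by
  rw [altChain_iff_s16, altChain_iff_s16]
  simp only [sepDir_insertMin_succ]
  refine and_congr_left fun _ => ?_
  simp [StrictMono]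

lemma hasChain_insertMin_succ {n : ℕ} (p : Fin (n + 1)) (τ : Equiv.Perm (Fin n)) (b : Bool)
    (t : ℕ) : HasChain (insertMin p τ) b (t + 1) ↔
      HasChain τ b (t + 1) ∨ (SepDir (insertMin p τ) b 0 ∧ HasChain τ (!b) t) := by
  constructor
  · rintro ⟨f, hf⟩
    have hs := (altChain_succ_iff _ _ _).1 hf
    by_cases h0 : f 0 = 0
    · right
      rw [h0] at hs
      refine ⟨hs.1, fun j => (f j.succ).pred (hs.2.1 j).ne', ?_⟩
      rw [← altChain_insertMin_succ p]
      simpa using hs.2.2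
    · left
      have hne : ∀ j, f j ≠ 0 := fun j hj =>
        h0 (Fin.le_zero_iff.1 (hj ▸ hf.1.monotone (Fin.zero_le j)))
      refine ⟨fun j => (f j).pred (hne j), ?_⟩
      rw [← altChain_insertMin_succ p]
      simpa using hf
  · rintro (⟨g, hg⟩ | ⟨h0, g, hg⟩)
    · exact ⟨_, (altChain_insertMin_succ p τ b g).2 hg⟩
    · refine ⟨Fin.cons 0 (fun j => (g j).succ), ?_⟩
      rw [altChain_succ_iff]
      refine ⟨by simpa using h0, fun j => by simp, ?_⟩
      simpa using (altChain_insertMin_succ p τ (!b) g).2 hg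

lemma tier_insertMin_of_sepDir {n : ℕ} (p : Fin (n + 1)) (τ : Equiv.Perm (Fin n)) (b : Bool)
    (h : SepDir (insertMin p τ) b 0) : tier (insertMin p τ) b = tier τ (!b) + 1 := by
  have hle := tier_le_succ τ b
  refine eq_of_forall_le_iff fun t => ?_
  rw [← hasChain_iff_le_tier]
  cases t with
  | zero => simp [hasChain_zero]
  | succ t =>
    rw [hasChain_insertMin_succ, hasChain_iff_le_tier, hasChain_iff_le_tier]
    simp only [h, true_and]
    omega

lemma tier_insertMin_of_not {n : ℕ} (p : Fin (n + 1)) (τ : Equiv.Perm (Fin n)) (b : Bool)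
    (h : ¬ SepDir (insertMin p τ) b 0) : tier (insertMin p τ) b = tier τ b := by
  refine eq_of_forall_le_iff fun t => ?_
  rw [← hasChain_iff_le_tier]
  cases t with
  | zero => simp [hasChain_zero]
  | succ t =>
    rw [hasChain_insertMin_succ, hasChain_iff_le_tier]
    simp [h]

/-- How the two tiers change when a new minimum is inserted at (1-indexed) position `k`, in terms
of the position of the old minimum. -/
lemma tier_insertMin {n : ℕ} (hn : 0 < n) (k : ℕ) (hk : 1 ≤ k) (hkn : k ≤ n + 1)
    (τ : Equiv.Perm (Fin n)) :
    let i := (τ.symm ⟨0, hn⟩ : ℕ) + 1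
    let σ := insertMin ⟨k - 1, by omega⟩ τ
    (k + 1 ≤ i → tier σ false = tier τ true + 1) ∧ (i ≤ k → tier σ false = tier τ false) ∧
    (i + 2 ≤ k → tier σ true = tier τ false + 1) ∧ (k ≤ i + 1 → tier σ true = tier τ true) := by
  intro i σ
  have hu := upSepPair_insertMin_zero hn ⟨k - 1, by omega⟩ τ
  have hd := downSepPair_insertMin_zero hn ⟨k - 1, by omega⟩ τ
  simp only at hu hd
  refine ⟨fun h => ?_, fun h => ?_, fun h => ?_, fun h => ?_⟩
  · exact tier_insertMin_of_sepDir _ τ false (by simp only [SepDir]; simp [hu]; omega)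
  · exact tier_insertMin_of_not _ τ false (by simp only [SepDir]; simp [hu]; omega)
  · exact tier_insertMin_of_sepDir _ τ true (by simp only [SepDir]; simp [hd]; omega)
  · exact tier_insertMin_of_not _ τ true (by simp only [SepDir]; simp [hd]; omega)

/-! ### Counting -/

/-- Summing over the position of the entry `1`. -/
lemma sum_card_onePos {n : ℕ} (hn : 0 < n) (P : Equiv.Perm (Fin n) → Prop) (S : Finset ℕ) :
    ∑ i ∈ S, Nat.card {τ : Equiv.Perm (Fin n) // P τ ∧ onePos τ i} =
      Nat.card {τ : Equiv.Perm (Fin n) // P τ ∧ (τ.symm ⟨0, hn⟩ : ℕ) + 1 ∈ S} := by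
  classical
  simp only [Nat.card_eq_fintype_card, Fintype.card_subtype]
  rw [Finset.card_eq_sum_card_fiberwise (f := fun τ => (τ.symm ⟨0, hn⟩ : ℕ) + 1) (t := S)]
  · refine Finset.sum_congr rfl fun i hi => congrArg Finset.card ?_
    ext τ
    have : onePos τ i ↔ (τ.symm ⟨0, hn⟩ : ℕ) + 1 = i := ⟨fun h => h hn, fun h _ => h⟩
    simp only [Finset.mem_filter, Finset.mem_univ, true_and, this]
    constructor
    · rintro ⟨h1, rfl⟩; exact ⟨⟨h1, hi⟩, rfl⟩
    · rintro ⟨⟨h1, -⟩, h2⟩; exact ⟨h1, h2⟩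
  · intro τ hτ
    simpa using (Finset.mem_filter.1 hτ).2.2

lemma card_eq_add {α : Type*} [Finite α] (R A B : α → Prop) (h : ∀ x, R x ↔ A x ∨ B x)
    (hd : ∀ x, A x → ¬ B x) :
    Nat.card {x // R x} = Nat.card {x // A x} + Nat.card {x // B x} := by
  classical
  have := Fintype.ofFinite α
  simp only [Nat.card_eq_fintype_card, Fintype.card_subtype]
  rw [← Finset.card_union_of_disjoint (Finset.disjoint_filter.2 fun x _ => hd x),
    ← Finset.filter_or]
  simp [h]

/-- Counting scheme behind all the recurrences: it suffices to decide, for each permutation and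
each position of its entry `1`, whether inserting a new minimum at position `k` yields a
permutation of the desired kind. -/
lemma card_insertion {n : ℕ} (hn : 0 < n) (k : ℕ) (hk : 1 ≤ k) (hkn : k ≤ n + 1)
    (P : Equiv.Perm (Fin (n + 1)) → Prop) (A B : Equiv.Perm (Fin n) → Prop) (S T : Finset ℕ)
    (h : ∀ τ : Equiv.Perm (Fin n), P (insertMin ⟨k - 1, by omega⟩ τ) ↔
      (A τ ∧ (τ.symm ⟨0, hn⟩ : ℕ) + 1 ∈ S) ∨ (B τ ∧ (τ.symm ⟨0, hn⟩ : ℕ) + 1 ∈ T))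
    (hd : ∀ τ : Equiv.Perm (Fin n), (A τ ∧ (τ.symm ⟨0, hn⟩ : ℕ) + 1 ∈ S) →
      ¬ (B τ ∧ (τ.symm ⟨0, hn⟩ : ℕ) + 1 ∈ T)) :
    Nat.card {σ : Equiv.Perm (Fin (n + 1)) // P σ ∧ onePos σ k} =
      (∑ i ∈ S, Nat.card {τ : Equiv.Perm (Fin n) // A τ ∧ onePos τ i}) +
        ∑ i ∈ T, Nat.card {τ : Equiv.Perm (Fin n) // B τ ∧ onePos τ i} := by
  rw [card_onePos_succ k hk hkn, sum_card_onePos hn, sum_card_onePos hn]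
  exact card_eq_add _ _ _ h hd

lemma muU_eq (n t k : ℕ) : muU n t k = Nat.card {σ : Equiv.Perm (Fin n) //
    (tier σ true < tier σ false ∧ tier σ true = t) ∧ onePos σ k} := by
  unfold muU
  simp only [upOriented_iff, and_assoc]
  rfl

lemma muD_eq (n t k : ℕ) : muD n t k = Nat.card {σ : Equiv.Perm (Fin n) //
    (tier σ false < tier σ true ∧ tier σ true = t) ∧ onePos σ k} := by
  unfold muD
  simp only [downOriented_iff, and_assoc]
  rfl

lemma eta_eq (n k : ℕ) : eta n k = Nat.card {σ : Equiv.Perm (Fin n) //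
    (tier σ true = tier σ false ∧ tier σ true = 0) ∧ onePos σ k} := by
  unfold eta
  have : ∀ σ : Equiv.Perm (Fin n),
      NoSepPairs σ ↔ tier σ true = tier σ false ∧ tier σ true = 0 := fun σ =>
    ⟨fun h => ⟨(noSepPairs_iff σ).1 h, noSepPairs_tier h _⟩, fun h => (noSepPairs_iff σ).2 h.1⟩
  simp only [this]

/-- the recurrences for `η`, `μ_U` and `μ_D` (all sums over `1 ≤ i ≤ n`). -/
theorem mu_recurrences (n k : ℕ) (hn : 1 ≤ n) (hk : 1 ≤ k) (hkn : k ≤ n + 1) :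
    eta (n + 1) k = eta n k + eta n (k - 1) ∧
    muU (n + 1) 0 k =
      (∑ i ∈ Finset.Icc (k + 1) n, eta n i) +
        ∑ i ∈ Finset.Icc (max 1 (k - 1)) n, muU n 0 i ∧
    (∀ t : ℕ, 1 ≤ t →
      muU (n + 1) t k =
        (∑ i ∈ Finset.Icc (k + 1) n, muD n t i) +
          ∑ i ∈ Finset.Icc (max 1 (k - 1)) n, muU n t i) ∧
    muD (n + 1) 1 k =
      (∑ i ∈ Finset.Icc 1 (k - 2), eta n i) +
        ∑ i ∈ Finset.Icc 1 (min k n), muD n 1 i ∧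
    (∀ t : ℕ, 2 ≤ t →
      muD (n + 1) t k =
        (∑ i ∈ Finset.Icc 1 (k - 2), muU n (t - 2) i) +
          ∑ i ∈ Finset.Icc 1 (min k n), muD n t i) := by
  -- Pointwise facts feeding every application of the counting scheme.
  have facts : ∀ τ : Equiv.Perm (Fin n), (τ.symm ⟨0, hn⟩ : ℕ) < n ∧
      tier τ true ≤ tier τ false + 1 ∧ tier τ false ≤ tier τ true + 1 ∧
      (tier τ true = tier τ false → tier τ true = 0) := fun τ =>
    ⟨(τ.symm ⟨0, hn⟩).isLt, tier_le_succ τ true, tier_le_succ τ false,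
      fun h => noSepPairs_tier ((noSepPairs_iff τ).2 h) true⟩
  simp only [muU_eq, muD_eq, eta_eq]
  refine ⟨?_, ?_, fun t ht => ?_, ?_, fun t ht => ?_⟩
  · have h := card_insertion hn k hk hkn (fun σ => tier σ true = tier σ false ∧ tier σ true = 0)
      (fun σ => tier σ true = tier σ false ∧ tier σ true = 0)
      (fun σ => tier σ true = tier σ false ∧ tier σ true = 0) {k} {k - 1} ?_ ?_
    · simpa only [Finset.sum_singleton] using h
    all_goals
      intro τ
      have h1 := facts τ
      have h2 := tier_insertMin hn k hk hkn τ
      simp only [Finset.mem_singleton] at h2 ⊢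
      omega
  all_goals
    apply card_insertion hn k hk hkn
    all_goals
      intro τ
      have h1 := facts τ
      have h2 := tier_insertMin hn k hk hkn τ
      simp only [Finset.mem_Icc] at h2 ⊢
      omega
end
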